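/- Let 2 ≤ p < ∞. For every real sequence (x_n)_{n≥1} with ∑_{n=1}^∞ |x_n|^p < ∞, setting y_n = ∑_{k=n}^∞ x_k/k, one has ∑_{n=1}^∞ |y_n - x_n|^p ≤ (p-1)^p · ∑_{n=1}^∞ |x_n|^p; moreover (p-1)^p is the least such constant: for every c < (p-1)^p there exists a real sequence (x_n) with 0 < ∑_{n=1}^∞ |x_n|^p < ∞ and ∑_{n=1}^∞ |y_n - x_n|^p > c · ∑_{n=1}^∞ |x_n|^p. That is, the operator norm of C^T - I on ℓ^p equals p - 1. -/

import Mathlib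

/-!
The upper bound rests on Burkholder's inequality
`|a| ^ p - (p - 1) ^ p * |b| ^ p ≤ K * |a + b| ^ (p - 2) * (a + b) * (a - (p - 1) * b)`,
valid for all real `a`, `b` with `K = p * (1 - 1 / p) ^ (p - 1)`. Take `a = y n - x n` and
`b = x n = n * (y n - y (n + 1))`: the right-hand side becomes
`K * (|y n| ^ p - p * n * |y n| ^ (p - 2) * y n * (y n - y (n + 1)))`, which the convexity of
`|·| ^ p` bounds by the telescoping term `K * (n * |y (n + 1)| ^ p - (n - 1) * |y n| ^ p)`.
Replacing `x` by its truncation to `n ≤ M` makes the boundary term vanish, and then `M → ∞`.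

The sequences `x n = n ^ (-a)` with `a` decreasing to `1 / p` show that the constant is optimal: for
them `y n ≥ x n / a`, so the ratio of the two sums is at least `(1 / a - 1) ^ p`.
-/

open Filter Finset Set Topology

section AbsRpow

lemma abs_rpow_sub_two_mul_self_mul_self {p : ℝ} (hp : p ≠ 0) (y : ℝ) :
    |y| ^ (p - 2) * y * y = |y| ^ p := by
  rcases eq_or_ne y 0 with rfl | hy
  · simp [Real.zero_rpow hp]
  · rw [mul_assoc, ← abs_mul_abs_self, ← sq, ← Real.rpow_natCast,
      ← Real.rpow_add (abs_pos.mpr hy)]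
    norm_num

lemma hasDerivAt_abs_rpow_mul_self {r : ℝ} (hr : 0 ≤ r) (x : ℝ) :
    HasDerivAt (fun y : ℝ ↦ |y| ^ r * y) ((r + 1) * |x| ^ r) x := by
  have hcont : Continuous fun y : ℝ ↦ |y| ^ r := continuous_abs.rpow_const fun _ ↦ Or.inr hr
  refine hasDerivAt_of_hasDerivAt_of_ne' (x := 0) (g := fun y ↦ (r + 1) * |y| ^ r) (fun y hy ↦ ?_)
    (hcont.mul continuous_id).continuousAt (continuous_const.mul hcont).continuousAt x
  have hy' : |y| ≠ 0 := abs_ne_zero.mpr hy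
  refine (((hasDerivAt_abs hy).rpow_const (Or.inl hy')).mul (hasDerivAt_id' y)).congr_deriv ?_
  rw [Real.rpow_sub_one hy']
  field_simp
  linear_combination r * sign_mul_self y

lemma abs_rpow_sub_abs_rpow_le {p : ℝ} (hp : 1 < p) (u v : ℝ) :
    |u| ^ p - |v| ^ p ≤ p * (|u| ^ (p - 2) * u) * (u - v) := by
  have hpq := Real.HolderConjugate.conjExponent hp
  have hp0 : p ≠ 0 := hpq.ne_zero
  have hnorm : |(|u| ^ (p - 2) * u)| ^ p.conjExponent = |u| ^ p := by
    rcases eq_or_ne u 0 with rfl | hu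
    · simp [Real.zero_rpow hp0, Real.zero_rpow hpq.symm.ne_zero]
    · rw [abs_mul, abs_of_nonneg (by positivity), ← Real.rpow_add_one (abs_ne_zero.mpr hu),
        ← Real.rpow_mul (abs_nonneg u), show p - 2 + 1 = p - 1 by ring, hpq.sub_one_mul_conj]
  have hyoung := Real.young_inequality v (|u| ^ (p - 2) * u) hpq
  rw [hnorm, div_eq_mul_inv _ p.conjExponent, ← hpq.one_sub_inv] at hyoung
  have hcleared := mul_le_mul_of_nonneg_left hyoung hpq.nonneg
  have hpinv : p * p⁻¹ = 1 := mul_inv_cancel₀ hp0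
  have hsq := abs_rpow_sub_two_mul_self_mul_self hp0 u
  calc |u| ^ p - |v| ^ p
      = p * |u| ^ p - p * (|v| ^ p / p + |u| ^ p * (1 - p⁻¹)) := by
        linear_combination (|v| ^ p - |u| ^ p) * hpinv
    _ ≤ p * |u| ^ p - p * (v * (|u| ^ (p - 2) * u)) := by linarith
    _ = p * (|u| ^ (p - 2) * u) * (u - v) := by linear_combination (-p) * hsq

end AbsRpow

section Burkholder

lemma log_le_sub_inv_div_two {y : ℝ} (hy : 1 ≤ y) : Real.log y ≤ (y - y⁻¹) / 2 := by
  rw [← Real.sinh_log (by linarith)]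
  exact Real.self_le_sinh_iff.mpr (Real.log_nonneg hy)

lemma log_add_two_sub_log_le {x : ℝ} (hx : 0 < x) :
    Real.log (x + 2) - Real.log x ≤ 2 * (x + 1) / (x * (x + 2)) := by
  have hlog := log_le_sub_inv_div_two ((one_le_div hx).mpr (by linarith : x ≤ x + 2))
  rw [Real.log_div (by positivity) hx.ne'] at hlog
  refine hlog.trans_eq ?_
  field_simp
  ring

lemma monotoneOn_log_two_mul_add_one_sub_mul_log :
    MonotoneOn (fun x ↦ Real.log (2 * x + 1) - x * (Real.log (x + 2) - Real.log x)) (Ici 1) := by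
  have hderiv {x : ℝ} (hx : 0 < x) : HasDerivAt
      (fun x ↦ Real.log (2 * x + 1) - x * (Real.log (x + 2) - Real.log x))
      (2 / (2 * x + 1) - (Real.log (x + 2) - Real.log x + x * (1 / (x + 2) - 1 / x))) x := by
    have hlin : HasDerivAt (fun x : ℝ ↦ 2 * x + 1) 2 x := by
      simpa using ((hasDerivAt_id x).const_mul 2).add_const 1
    have hid : HasDerivAt (fun x : ℝ ↦ x) 1 x := hasDerivAt_id x
    exact ((hlin.log (by positivity)).sub (hid.mul
      (((hid.add_const 2).log (by positivity)).sub (hid.log hx.ne')))).congr_deriv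
        (by rw [one_mul, Pi.sub_apply])
  refine monotoneOn_of_hasDerivWithinAt_nonneg (convex_Ici 1)
    (fun x hx ↦ (hderiv (one_pos.trans_le hx)).continuousAt.continuousWithinAt)
    (fun x hx ↦ (hderiv (one_pos.trans_le (interior_subset hx))).hasDerivWithinAt) fun x hx ↦ ?_
  have hx1 : 1 ≤ x := interior_subset hx
  have hx0 : 0 < x := one_pos.trans_le hx1
  have hsq : 0 ≤ x ^ 2 - 1 := sub_nonneg.mpr (one_le_pow₀ hx1)
  calc 0 ≤ 2 * (x ^ 2 - 1) / ((2 * x + 1) * (x * (x + 2))) := by positivity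
    _ = 2 / (2 * x + 1) - (2 * (x + 1) / (x * (x + 2)) + x * (1 / (x + 2) - 1 / x)) := by
      field_simp
      ring
    _ ≤ 2 / (2 * x + 1) - (Real.log (x + 2) - Real.log x + x * (1 / (x + 2) - 1 / x)) := by
      gcongr
      exact log_add_two_sub_log_le hx0

lemma mul_log_add_two_sub_log_le {q : ℝ} (hq : 1 ≤ q) :
    q * (Real.log (q + 2) - Real.log q) ≤ Real.log (2 * q + 1) := by
  have hmono := monotoneOn_log_two_mul_add_one_sub_mul_log self_mem_Ici hq hq
  norm_num at hmono
  exact hmono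

-- This is the value of Burkholder's inequality at its critical point `a = p + 1`, `b = -1`.
lemma add_one_rpow_le {p : ℝ} (hp : 2 ≤ p) :
    (p + 1) ^ p ≤ (p - 1) ^ (p - 1) * ((2 * p - 1) * (p + 1)) := by
  have hp1 : 0 < p - 1 := by linarith
  have hp2 : 0 < p + 1 := by linarith
  have hp3 : 0 < 2 * p - 1 := by linarith
  have hlog := mul_log_add_two_sub_log_le (by linarith : 1 ≤ p - 1)
  rw [show p - 1 + 2 = p + 1 by ring, show 2 * (p - 1) + 1 = 2 * p - 1 by ring] at hlog
  rw [← Real.log_le_log_iff (by positivity) (by positivity), Real.log_rpow hp2,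
    Real.log_mul (by positivity) (by positivity), Real.log_mul hp3.ne' hp2.ne',
    Real.log_rpow hp1]
  linarith

/-- Burkholder's constant `p * (1 - 1 / p) ^ (p - 1)`, the factor in the pointwise majorant of
`|a| ^ p - (p - 1) ^ p * |b| ^ p`. -/
noncomputable def burkholderConst (p : ℝ) : ℝ := (p - 1) ^ (p - 1) / p ^ (p - 2)

/-- The difference between the two sides of Burkholder's inequality
`|a| ^ p - (p - 1) ^ p * |b| ^ p ≤ K * |a + b| ^ (p - 2) * (a + b) * (a - (p - 1) * b)`
for real `a` and `b`, where `K = burkholderConst p`. -/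
noncomputable def burkholderGap (p a b : ℝ) : ℝ :=
  (p - 1) ^ p * |b| ^ p - |a| ^ p
    + burkholderConst p * (|a + b| ^ (p - 2) * (a + b)) * (a - (p - 1) * b)

variable {p : ℝ}

lemma burkholderConst_nonneg (hp : 1 ≤ p) : 0 ≤ burkholderConst p :=
  div_nonneg (Real.rpow_nonneg (by linarith) _) (Real.rpow_nonneg (by linarith) _)

lemma burkholderConst_mul_rpow (hp : 0 < p) :
    burkholderConst p * p ^ (p - 2) = (p - 1) ^ (p - 1) :=
  div_mul_cancel₀ _ (Real.rpow_pos_of_pos hp _).ne'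

lemma burkholderConst_mul_rpow_mul_sub_one (hp : 1 < p) :
    burkholderConst p * p ^ (p - 2) * (p - 1) = (p - 1) ^ p := by
  have hp1 : p - 1 ≠ 0 := (sub_pos.mpr hp).ne'
  rw [burkholderConst_mul_rpow (by linarith), Real.rpow_sub_one hp1, div_mul_cancel₀ _ hp1]

lemma burkholderGap_mul_mul (hp : p ≠ 0) (t a b : ℝ) :
    burkholderGap p (t * a) (t * b) = |t| ^ p * burkholderGap p a b := by
  simp only [burkholderGap, ← mul_add, abs_mul, Real.mul_rpow (abs_nonneg _) (abs_nonneg _)]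
  linear_combination burkholderConst p * |a + b| ^ (p - 2) * (a + b) * (a - (p - 1) * b)
    * abs_rpow_sub_two_mul_self_mul_self hp t

lemma burkholderGap_zero_left_nonneg (hp : 2 ≤ p) (b : ℝ) : 0 ≤ burkholderGap p 0 b := by
  have hsq := abs_rpow_sub_two_mul_self_mul_self (by linarith : p ≠ 0) b
  have hone : 1 ≤ p ^ (p - 2) := Real.one_le_rpow (by linarith) (by linarith)
  calc 0 ≤ burkholderConst p * (p - 1) * (p ^ (p - 2) - 1) * |b| ^ p :=
        mul_nonneg (mul_nonneg (mul_nonneg (burkholderConst_nonneg (by linarith)) (by linarith))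
          (sub_nonneg.mpr hone)) (by positivity)
    _ = burkholderGap p 0 b := by
        rw [burkholderGap, ← burkholderConst_mul_rpow_mul_sub_one (by linarith), abs_zero,
          Real.zero_rpow (by linarith), zero_add, zero_sub]
        linear_combination (burkholderConst p * (p - 1)) * hsq

lemma burkholderGap_one_inv_sub_one (hp : 1 < p) : burkholderGap p 1 (1 / (p - 1)) = 0 := by
  have hp1 : 0 < p - 1 := sub_pos.mpr hp
  have hscale := burkholderGap_mul_mul (by linarith : p ≠ 0) (1 / (p - 1)) (p - 1) 1
  rw [one_div_mul_cancel hp1.ne', mul_one] at hscale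
  rw [hscale]
  simp [burkholderGap, abs_of_pos hp1]

lemma burkholderGap_one_neg_inv_add_one_nonneg (hp : 2 ≤ p) :
    0 ≤ burkholderGap p 1 (-(1 / (p + 1))) := by
  have hp0 : 0 < p := by linarith
  have hp1 : 0 < p + 1 := by linarith
  have hscale := burkholderGap_mul_mul hp0.ne' (1 / (p + 1)) (p + 1) (-1)
  rw [one_div_mul_cancel hp1.ne', mul_neg_one] at hscale
  have hvalue : burkholderGap p (p + 1) (-1)
      = (p - 1) ^ (p - 1) * ((2 * p - 1) * (p + 1)) - (p + 1) ^ p := by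
    rw [burkholderGap, add_neg_cancel_right, abs_neg, abs_one, Real.one_rpow, abs_of_pos hp1,
      abs_of_pos hp0, ← burkholderConst_mul_rpow_mul_sub_one (by linarith),
      ← burkholderConst_mul_rpow hp0]
    ring
  rw [hscale, hvalue]
  exact mul_nonneg (by positivity) (sub_nonneg.mpr (add_one_rpow_le hp))

lemma hasDerivAt_burkholderGap_one (hp : 2 ≤ p) (u : ℝ) :
    HasDerivAt (burkholderGap p 1)
      (p * (p - 1) * burkholderConst p * u * ((p * |u|) ^ (p - 2) - |1 + u| ^ (p - 2))) u := by
  have hfst := ((hasDerivAt_abs_rpow u (by linarith : 1 < p)).const_mul ((p - 1) ^ p)).sub_const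
    (|1| ^ p)
  have hpow : HasDerivAt (fun u : ℝ ↦ |1 + u| ^ (p - 2) * (1 + u))
      ((p - 2 + 1) * |1 + u| ^ (p - 2)) u :=
    (hasDerivAt_abs_rpow_mul_self (by linarith) (1 + u)).comp_const_add 1 u
  have hlin : HasDerivAt (fun u : ℝ ↦ 1 - (p - 1) * u) (-((p - 1) * 1)) u :=
    ((hasDerivAt_id' u).const_mul (p - 1)).const_sub 1
  refine (hfst.add ((hpow.const_mul (burkholderConst p)).mul hlin)).congr_deriv ?_
  rw [← burkholderConst_mul_rpow_mul_sub_one (by linarith),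
    Real.mul_rpow (by linarith) (abs_nonneg u)]
  ring

lemma deriv_burkholderGap_one_nonneg (hp : 2 ≤ p) {u : ℝ}
    (hu : 0 ≤ u ∧ |1 + u| ≤ p * |u| ∨ u ≤ 0 ∧ p * |u| ≤ |1 + u|) :
    0 ≤ deriv (burkholderGap p 1) u := by
  rw [(hasDerivAt_burkholderGap_one hp u).deriv, mul_assoc]
  have hK : 0 ≤ p * (p - 1) * burkholderConst p :=
    mul_nonneg (mul_nonneg (by linarith) (by linarith)) (burkholderConst_nonneg (by linarith))
  refine mul_nonneg hK ?_
  rcases hu with ⟨hu0, hle⟩ | ⟨hu0, hle⟩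
  · exact mul_nonneg hu0 (sub_nonneg.mpr (Real.rpow_le_rpow (by positivity) hle (by linarith)))
  · exact mul_nonneg_of_nonpos_of_nonpos hu0
      (sub_nonpos.mpr (Real.rpow_le_rpow (by positivity) hle (by linarith)))

lemma deriv_burkholderGap_one_nonpos (hp : 2 ≤ p) {u : ℝ}
    (hu : 0 ≤ u ∧ p * |u| ≤ |1 + u| ∨ u ≤ 0 ∧ |1 + u| ≤ p * |u|) :
    deriv (burkholderGap p 1) u ≤ 0 := by
  rw [(hasDerivAt_burkholderGap_one hp u).deriv, mul_assoc]
  have hK : 0 ≤ p * (p - 1) * burkholderConst p :=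
    mul_nonneg (mul_nonneg (by linarith) (by linarith)) (burkholderConst_nonneg (by linarith))
  refine mul_nonpos_of_nonneg_of_nonpos hK ?_
  rcases hu with ⟨hu0, hle⟩ | ⟨hu0, hle⟩
  · exact mul_nonpos_of_nonneg_of_nonpos hu0
      (sub_nonpos.mpr (Real.rpow_le_rpow (by positivity) hle (by linarith)))
  · exact mul_nonpos_of_nonpos_of_nonneg hu0
      (sub_nonneg.mpr (Real.rpow_le_rpow (by positivity) hle (by linarith)))

lemma isMinOn_burkholderGap_one_Ici (hp : 2 ≤ p) :
    IsMinOn (burkholderGap p 1) (Ici 0) (1 / (p - 1)) := by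
  have hp1 : 0 < p - 1 := by linarith
  have hdiff : Differentiable ℝ (burkholderGap p 1) :=
    fun u ↦ (hasDerivAt_burkholderGap_one hp u).differentiableAt
  refine isMinOn_Ici_of_deriv hdiff.continuous.continuousAt hdiff.continuous.continuousAt
    hdiff.differentiableOn hdiff.differentiableOn (fun u ⟨hu0, hu⟩ ↦ ?_) fun u hu ↦ ?_
  · refine deriv_burkholderGap_one_nonpos hp (Or.inl ⟨hu0.le, ?_⟩)
    rw [abs_of_pos hu0, abs_of_pos (by linarith)]
    linarith [(lt_div_iff₀ hp1).mp hu]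
  · have hu0 : 0 < u := (one_div_pos.mpr hp1).trans hu
    refine deriv_burkholderGap_one_nonneg hp (Or.inl ⟨hu0.le, ?_⟩)
    rw [abs_of_pos hu0, abs_of_pos (by linarith)]
    linarith [(div_lt_iff₀ hp1).mp hu]

lemma isMinOn_burkholderGap_one_Iic (hp : 2 ≤ p) :
    IsMinOn (burkholderGap p 1) (Iic 0) (-(1 / (p + 1))) := by
  have hp1 : 0 < p + 1 := by linarith
  have hdiff : Differentiable ℝ (burkholderGap p 1) :=
    fun u ↦ (hasDerivAt_burkholderGap_one hp u).differentiableAt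
  rw [← neg_div]
  refine isMinOn_Iic_of_deriv hdiff.continuous.continuousAt hdiff.continuous.continuousAt
    hdiff.differentiableOn hdiff.differentiableOn (fun u hu ↦ ?_) fun u ⟨hu, hu0⟩ ↦ ?_
  · have hu0 : u < 0 := hu.out.trans (div_neg_of_neg_of_pos neg_one_lt_zero hp1)
    refine deriv_burkholderGap_one_nonpos hp (Or.inr ⟨hu0.le, ?_⟩)
    rw [abs_of_neg hu0, abs_le]
    constructor <;> nlinarith [(lt_div_iff₀ hp1).mp hu]
  · refine deriv_burkholderGap_one_nonneg hp (Or.inr ⟨hu0.le, ?_⟩)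
    rw [abs_of_neg hu0]
    linarith [(div_lt_iff₀ hp1).mp hu, le_abs_self (1 + u)]

lemma burkholderGap_one_nonneg (hp : 2 ≤ p) (u : ℝ) : 0 ≤ burkholderGap p 1 u := by
  rcases le_total u 0 with hu | hu
  · exact (burkholderGap_one_neg_inv_add_one_nonneg hp).trans (isMinOn_burkholderGap_one_Iic hp hu)
  · exact (burkholderGap_one_inv_sub_one (by linarith)).ge.trans
      (isMinOn_burkholderGap_one_Ici hp hu)

theorem burkholderGap_nonneg (hp : 2 ≤ p) (a b : ℝ) : 0 ≤ burkholderGap p a b := by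
  rcases eq_or_ne a 0 with rfl | ha
  · exact burkholderGap_zero_left_nonneg hp b
  · have hscale := burkholderGap_mul_mul (by linarith : p ≠ 0) a 1 (b / a)
    rw [mul_one, mul_div_cancel₀ b ha] at hscale
    rw [hscale]
    exact mul_nonneg (by positivity) (burkholderGap_one_nonneg hp _)

end Burkholder

section CesaroTranspose

/-- The transpose `C^T` of the Cesàro operator, `(C^T x) n = ∑_{k ≥ n} x k / k`. Sequences are
indexed from `1`: the division by zero makes the entry `x 0` irrelevant. -/
noncomputable def cesaroTranspose (x : ℕ → ℝ) (n : ℕ) : ℝ := ∑' k : ℕ, x (n + k) / (n + k : ℕ)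

lemma cesaroTranspose_succ (x : ℕ → ℝ) (n : ℕ) :
    cesaroTranspose x (n + 1) = ∑' k : ℕ, x (n + 1 + k) / ((n : ℝ) + 1 + k) := by
  simp only [cesaroTranspose, Nat.cast_add, Nat.cast_one]

lemma tendsto_sum_Ico_cesaroTranspose {x : ℕ → ℝ} (hx : Summable fun n ↦ x n / n) (n : ℕ) :
    Tendsto (fun M ↦ ∑ k ∈ Finset.Ico n M, x k / k) atTop (𝓝 (cesaroTranspose x n)) := by
  have htail : Summable fun k ↦ x (n + k) / (n + k : ℕ) :=
    hx.comp_injective (add_right_injective n)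
  simpa only [cesaroTranspose, Function.comp_def, Finset.sum_Ico_eq_sum_range] using
    htail.hasSum.tendsto_sum_nat.comp (tendsto_sub_atTop_nat n)

variable {p : ℝ}

lemma summable_div_natCast_of_summable_abs_rpow (hp : 1 < p) {x : ℕ → ℝ}
    (hx : Summable fun n ↦ |x (n + 1)| ^ p) : Summable fun n ↦ x n / n := by
  have hpq := Real.HolderConjugate.conjExponent hp
  have hinv : Summable fun n : ℕ ↦ ((n : ℝ)⁻¹) ^ p.conjExponent := by
    simpa only [Real.inv_rpow (Nat.cast_nonneg _)] using
      Real.summable_nat_rpow_inv.mpr hpq.symm.lt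
  refine (Real.summable_mul_of_Lp_Lq_of_nonneg hpq (fun n ↦ abs_nonneg (x n))
    (fun n ↦ by positivity) ((summable_nat_add_iff 1).mp hx) hinv).of_norm_bounded fun n ↦ ?_
  rw [norm_div, Real.norm_eq_abs, RCLike.norm_natCast, div_eq_mul_inv]

lemma abs_sub_mul_sub_rpow_le (hp : 2 ≤ p) {t : ℝ} (ht : 0 ≤ t) (y z : ℝ) :
    |y - t * (y - z)| ^ p ≤ (p - 1) ^ p * |t * (y - z)| ^ p
      + burkholderConst p * (t * |z| ^ p - (t - 1) * |y| ^ p) := by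
  have hgap := burkholderGap_nonneg hp (y - t * (y - z)) (t * (y - z))
  rw [burkholderGap, sub_add_cancel] at hgap
  have htangent := mul_le_mul_of_nonneg_left
    (mul_le_mul_of_nonneg_left (abs_rpow_sub_abs_rpow_le (by linarith : 1 < p) y z) ht)
    (burkholderConst_nonneg (by linarith : 1 ≤ p))
  linear_combination hgap + htangent
    + burkholderConst p * abs_rpow_sub_two_mul_self_mul_self (by linarith : p ≠ 0) y

lemma sum_range_abs_sub_mul_sub_rpow_le (hp : 2 ≤ p) (y : ℕ → ℝ) (N : ℕ) :
    ∑ n ∈ range N, |y n - (n + 1) * (y n - y (n + 1))| ^ p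
      ≤ (p - 1) ^ p * ∑ n ∈ range N, |((n : ℝ) + 1) * (y n - y (n + 1))| ^ p
        + burkholderConst p * (N * |y N| ^ p) := by
  have htelescope : ∑ n ∈ range N, ((n + 1 : ℝ) * |y (n + 1)| ^ p - n * |y n| ^ p)
      = N * |y N| ^ p := by
    simpa using Finset.sum_range_sub (fun n : ℕ ↦ (n : ℝ) * |y n| ^ p) N
  rw [← htelescope, mul_sum, mul_sum, ← sum_add_distrib]
  refine sum_le_sum fun n _ ↦ ?_
  simpa only [add_sub_cancel_right] using
    abs_sub_mul_sub_rpow_le hp (by positivity : (0 : ℝ) ≤ n + 1) (y n) (y (n + 1))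

lemma sum_range_abs_sum_Ico_sub_rpow_le (hp : 2 ≤ p) (x : ℕ → ℝ) (M : ℕ) :
    ∑ n ∈ range M, |∑ k ∈ Finset.Ico (n + 1) (M + 1), x k / k - x (n + 1)| ^ p
      ≤ (p - 1) ^ p * ∑ n ∈ range M, |x (n + 1)| ^ p := by
  let y : ℕ → ℝ := fun n ↦ ∑ k ∈ Finset.Ico (n + 1) (M + 1), x k / k
  have hx {n : ℕ} (hn : n ∈ range M) : (n + 1) * (y n - y (n + 1)) = x (n + 1) := by
    simp only [y]
    rw [sum_eq_sum_Ico_succ_bot (Nat.succ_lt_succ (Finset.mem_range.mp hn)), add_sub_cancel_right,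
      Nat.cast_succ, mul_div_cancel₀ _ (Nat.cast_add_one_ne_zero n)]
  have hyM : |y M| ^ p = 0 := by simp [y, Real.zero_rpow (by linarith : p ≠ 0)]
  calc ∑ n ∈ range M, |y n - x (n + 1)| ^ p
      = ∑ n ∈ range M, |y n - (n + 1) * (y n - y (n + 1))| ^ p :=
        sum_congr rfl fun n hn ↦ by rw [hx hn]
    _ ≤ (p - 1) ^ p * ∑ n ∈ range M, |((n : ℝ) + 1) * (y n - y (n + 1))| ^ p := by
        simpa only [hyM, mul_zero, add_zero] using sum_range_abs_sub_mul_sub_rpow_le hp y M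
    _ = (p - 1) ^ p * ∑ n ∈ range M, |x (n + 1)| ^ p :=
        congrArg _ (sum_congr rfl fun n hn ↦ by rw [hx hn])

lemma sum_range_abs_cesaroTranspose_sub_rpow_le (hp : 2 ≤ p) {x : ℕ → ℝ}
    (hx : Summable fun n ↦ |x (n + 1)| ^ p) (N : ℕ) :
    ∑ n ∈ range N, |cesaroTranspose x (n + 1) - x (n + 1)| ^ p
      ≤ (p - 1) ^ p * ∑' n, |x (n + 1)| ^ p := by
  have hdiv := summable_div_natCast_of_summable_abs_rpow (by linarith) hx
  have hlim : Tendsto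
      (fun M ↦ ∑ n ∈ range N, |∑ k ∈ Finset.Ico (n + 1) (M + 1), x k / k - x (n + 1)| ^ p) atTop
      (𝓝 (∑ n ∈ range N, |cesaroTranspose x (n + 1) - x (n + 1)| ^ p)) :=
    tendsto_finsetSum _ fun n _ ↦
      ((((tendsto_sum_Ico_cesaroTranspose hdiv (n + 1)).comp (tendsto_add_atTop_nat 1)).sub_const
        _).abs).rpow_const (Or.inr (by linarith))
  refine le_of_tendsto hlim ?_
  filter_upwards [eventually_ge_atTop N] with M hM
  calc _ ≤ ∑ n ∈ range M, |∑ k ∈ Finset.Ico (n + 1) (M + 1), x k / k - x (n + 1)| ^ p :=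
        sum_le_sum_of_subset_of_nonneg (range_mono hM) fun _ _ _ ↦ by positivity
    _ ≤ (p - 1) ^ p * ∑ n ∈ range M, |x (n + 1)| ^ p := sum_range_abs_sum_Ico_sub_rpow_le hp x M
    _ ≤ (p - 1) ^ p * ∑' n, |x (n + 1)| ^ p :=
        mul_le_mul_of_nonneg_left (hx.sum_le_tsum _ fun _ _ ↦ by positivity)
          (Real.rpow_nonneg (by linarith) _)

theorem summable_abs_cesaroTranspose_sub_rpow (hp : 2 ≤ p) {x : ℕ → ℝ}
    (hx : Summable fun n ↦ |x (n + 1)| ^ p) :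
    Summable fun n ↦ |cesaroTranspose x (n + 1) - x (n + 1)| ^ p :=
  summable_of_sum_range_le (fun _ ↦ by positivity)
    (sum_range_abs_cesaroTranspose_sub_rpow_le hp hx)

theorem tsum_abs_cesaroTranspose_sub_rpow_le (hp : 2 ≤ p) {x : ℕ → ℝ}
    (hx : Summable fun n ↦ |x (n + 1)| ^ p) :
    ∑' n, |cesaroTranspose x (n + 1) - x (n + 1)| ^ p ≤ (p - 1) ^ p * ∑' n, |x (n + 1)| ^ p :=
  Real.tsum_le_of_sum_range_le (fun _ ↦ by positivity)
    (sum_range_abs_cesaroTranspose_sub_rpow_le hp hx)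

end CesaroTranspose

section PowerSequence

variable {a p : ℝ}

lemma one_sub_mul_le_one_add_rpow_neg (ha : 0 ≤ a) {s : ℝ} (hs : -1 < s) :
    1 - a * s ≤ (1 + s) ^ (-a) := by
  have hs' : 0 < 1 + s := by linarith
  have hlog := mul_le_mul_of_nonneg_right (Real.log_le_sub_one_of_pos hs') ha
  rw [Real.rpow_def_of_pos hs']
  linarith [Real.add_one_le_exp (Real.log (1 + s) * -a)]

lemma rpow_neg_sub_add_one_rpow_neg_le (ha : 0 ≤ a) {t : ℝ} (ht : 0 < t) :
    t ^ (-a) - (t + 1) ^ (-a) ≤ a * (t ^ (-a) / t) := by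
  have hbernoulli := one_sub_mul_le_one_add_rpow_neg ha
    (neg_one_lt_zero.trans (one_div_pos.mpr ht))
  calc t ^ (-a) - (t + 1) ^ (-a) = t ^ (-a) - t ^ (-a) * (1 + 1 / t) ^ (-a) := by
        rw [← Real.mul_rpow ht.le (by positivity), mul_add, mul_one, mul_one_div_cancel ht.ne']
    _ ≤ t ^ (-a) - t ^ (-a) * (1 - a * (1 / t)) := by gcongr
    _ = a * (t ^ (-a) / t) := by ring

lemma rpow_neg_le_mul_cesaroTranspose (ha : 0 < a) {n : ℕ} (hn : n ≠ 0) :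
    (n : ℝ) ^ (-a) ≤ a * cesaroTranspose (fun m ↦ (m : ℝ) ^ (-a)) n := by
  have hdiv : Summable fun k : ℕ ↦ ((n + k : ℕ) : ℝ) ^ (-a) / (n + k : ℕ) := by
    refine ((Real.summable_nat_rpow.mpr (by linarith : -a - 1 < -1)).comp_injective
      (add_right_injective n)).congr fun k ↦ Real.rpow_sub_one ?_ _
    exact Nat.cast_ne_zero.mpr (by positivity)
  have hpartial (M : ℕ) : (n : ℝ) ^ (-a) - ((n + M : ℕ) : ℝ) ^ (-a)
      ≤ a * ∑ k ∈ range M, ((n + k : ℕ) : ℝ) ^ (-a) / (n + k : ℕ) := by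
    rw [mul_sum]
    refine (sum_range_sub' (fun k : ℕ ↦ ((n + k : ℕ) : ℝ) ^ (-a)) M).symm.trans_le
      (sum_le_sum fun k _ ↦ ?_)
    rw [← add_assoc, Nat.cast_add_one]
    exact rpow_neg_sub_add_one_rpow_neg_le ha.le (Nat.cast_pos.mpr (by omega))
  have hvanish : Tendsto (fun M : ℕ ↦ ((n + M : ℕ) : ℝ) ^ (-a)) atTop (𝓝 0) :=
    (tendsto_rpow_neg_atTop ha).comp
      (tendsto_natCast_atTop_atTop.comp
        (tendsto_atTop_mono (fun M ↦ Nat.le_add_left M n) tendsto_id))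
  refine le_of_tendsto_of_tendsto' ?_ (hdiv.hasSum.tendsto_sum_nat.const_mul a) hpartial
  simpa only [sub_zero] using hvanish.const_sub ((n : ℝ) ^ (-a))

lemma summable_abs_natCast_rpow_neg_rpow (hap : 1 < a * p) :
    Summable fun n : ℕ ↦ |((n + 1 : ℕ) : ℝ) ^ (-a)| ^ p := by
  refine ((summable_nat_add_iff 1).mpr (Real.summable_nat_rpow.mpr (neg_lt_neg hap))).congr
    fun n ↦ ?_
  rw [abs_of_nonneg (by positivity), ← Real.rpow_mul (by positivity), neg_mul]

lemma mul_tsum_natCast_rpow_neg_le (hp : 2 ≤ p) (ha0 : 0 < a) (ha1 : a ≤ 1) (hap : 1 < a * p) :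
    (1 / a - 1) ^ p * ∑' n : ℕ, |((n + 1 : ℕ) : ℝ) ^ (-a)| ^ p
      ≤ ∑' n : ℕ, |cesaroTranspose (fun m ↦ (m : ℝ) ^ (-a)) (n + 1)
          - ((n + 1 : ℕ) : ℝ) ^ (-a)| ^ p := by
  have hx := summable_abs_natCast_rpow_neg_rpow hap
  have hratio : 0 ≤ 1 / a - 1 := sub_nonneg.mpr ((one_le_div ha0).mpr ha1)
  rw [← tsum_mul_left]
  refine (hx.mul_left _).tsum_le_tsum (fun n ↦ ?_) (summable_abs_cesaroTranspose_sub_rpow hp hx)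
  rw [← Real.mul_rpow hratio (abs_nonneg _), abs_of_nonneg (by positivity)]
  refine Real.rpow_le_rpow (by positivity) (le_trans ?_ (le_abs_self _)) (by linarith)
  rw [sub_one_mul, one_div_mul_eq_div]
  gcongr
  exact (div_le_iff₀' ha0).mpr (rpow_neg_le_mul_cesaroTranspose ha0 n.succ_ne_zero)

lemma exists_lt_one_div_sub_one_rpow (hp : 1 < p) {c : ℝ} (hc : c < (p - 1) ^ p) :
    ∃ a : ℝ, 1 / p < a ∧ a < 1 ∧ c < (1 / a - 1) ^ p := by
  have hp0 : 0 < p := by linarith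
  have hcont : ContinuousAt (fun a : ℝ ↦ (1 / a - 1) ^ p) (1 / p) :=
    ((continuousAt_const.div continuousAt_id (one_div_pos.mpr hp0).ne').sub
      continuousAt_const).rpow_const (Or.inr hp0.le)
  have hlt : ∀ᶠ a in 𝓝[>] (1 / p), c < (1 / a - 1) ^ p :=
    (hcont.eventually (lt_mem_nhds (by simpa only [one_div_one_div]))).filter_mono
      nhdsWithin_le_nhds
  have hIoo : ∀ᶠ a in 𝓝[>] (1 / p), a ∈ Set.Ioo (1 / p) 1 :=
    Ioo_mem_nhdsGT ((div_lt_one hp0).mpr hp)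
  obtain ⟨a, hca, hpa, ha1⟩ := (hlt.and hIoo).exists
  exact ⟨a, hpa, ha1, hca⟩

end PowerSequence

/-- Theorem 2, first part: for `2 ≤ p < ∞`, the operator norm of `C^T - I` on `ℓ^p` equals
`p - 1`: the inequality `∑ |y_n - x_n|^p ≤ (p-1)^p ∑ |x_n|^p` holds with
`y_n = ∑_{k=n}^∞ x_k/k`, and `(p-1)^p` is the least such constant. (Sequences are indexed
so that term `n` of the paper is `x (n+1)` here, `n : ℕ`.) -/
theorem stmt5 (p : ℝ) (hp : 2 ≤ p) :
    (∀ x : ℕ → ℝ, (Summable fun n : ℕ => |x (n + 1)| ^ p) →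
      ∑' n : ℕ, |(∑' k : ℕ, x (n + 1 + k) / ((n : ℝ) + 1 + k)) - x (n + 1)| ^ p
        ≤ (p - 1) ^ p * ∑' n : ℕ, |x (n + 1)| ^ p) ∧
    ∀ c : ℝ, c < (p - 1) ^ p → ∃ x : ℕ → ℝ,
      (Summable fun n : ℕ => |x (n + 1)| ^ p) ∧
      0 < ∑' n : ℕ, |x (n + 1)| ^ p ∧
      c * ∑' n : ℕ, |x (n + 1)| ^ p <
        ∑' n : ℕ, |(∑' k : ℕ, x (n + 1 + k) / ((n : ℝ) + 1 + k)) - x (n + 1)| ^ p := by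
  simp only [← cesaroTranspose_succ]
  refine ⟨fun x hx ↦ tsum_abs_cesaroTranspose_sub_rpow_le hp hx, fun c hc ↦ ?_⟩
  obtain ⟨a, hpa, ha1, hca⟩ := exists_lt_one_div_sub_one_rpow (by linarith) hc
  have hap : 1 < a * p := (div_lt_iff₀ (by linarith)).mp hpa
  have ha0 : 0 < a := (one_div_pos.mpr (by linarith)).trans hpa
  have hx := summable_abs_natCast_rpow_neg_rpow hap
  have hpos : 0 < ∑' n : ℕ, |((n + 1 : ℕ) : ℝ) ^ (-a)| ^ p :=
    hx.tsum_pos (fun n ↦ by positivity) 0 (by positivity)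
  exact ⟨fun m ↦ (m : ℝ) ^ (-a), hx, hpos, (mul_lt_mul_of_pos_right hca hpos).trans_le
    (mul_tsum_natCast_rpow_neg_le hp ha0 ha1.le hap)⟩
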